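/- For every positive integer N there exists a finite multiset σ of positive integers with ν(σ) = 0 such that the largest element of σ exceeds every other element of σ by at least N. In particular, for every n ≥ 1 the n-fold bag product {1,2}**{1,2}**⋯**{1,2} (the multiset of all products ε₁ε₂⋯εₙ with each εᵢ ∈ {1,2}) satisfies ν = 0, and its largest element 2ⁿ exceeds its second-largest element 2^{n−1} by 2^{n−1}. -/

import Mathlib

/-!
Power sums are multiplicative under the bag product, so the `k`-th power sum of the `n`-fold
product of `{1, 2}` is `(1 + 2 ^ k) ^ n` (`twoPow_powerSum`). For `k = 1, 3` this gives
`3 ^ n` and `9 ^ n = (3 ^ n) ^ 2`, whence `ν = 0`. The elements of the product are exactly the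
powers `2 ^ i` with `i ≤ n` (`mem_twoPow`), so the two largest are `2 ^ n` and `2 ^ (n - 1)`,
and their difference is unbounded as `n` grows.
-/

/-- ν of a finite multiset of natural numbers, computed in ℤ. -/
def nu (σ : Multiset ℕ) : ℤ :=
  ((σ.map (fun x => (x : ℤ))).sum) ^ 2 - (σ.map (fun x => (x : ℤ) ^ 3)).sum

/-- Bag product of two finite multisets of naturals. -/
def bagProd (A B : Multiset ℕ) : Multiset ℕ := A.bind (fun a => B.map (fun b => a * b))

/-- The n-fold bag product of {1,2} (with the empty product being {1}). -/
def twoPow : ℕ → Multiset ℕ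
  | 0 => {1}
  | n + 1 => bagProd (twoPow n) ({1, 2} : Multiset ℕ)

/-- In `nu` the coercion to `ℤ` elaborates as a monadic lift of the whole multiset along the
cast; this is the same as casting each element under the `map`. -/
theorem nu_eq (σ : Multiset ℕ) :
    nu σ = ((σ.map (fun x : ℕ => (x : ℤ))).sum) ^ 2 - (σ.map (fun x : ℕ => (x : ℤ) ^ 3)).sum := by
  simp [nu, Multiset.bind_def, Multiset.pure_def, Multiset.bind_singleton]

/-- The power sum `∑ x ^ k` is multiplicative for the bag product with `{1, 2}`, hence equals
`(1 + 2 ^ k) ^ n` on the `n`-fold product. -/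
theorem twoPow_powerSum (k n : ℕ) :
    ((twoPow n).map (fun x : ℕ => (x : ℤ) ^ k)).sum = (1 + 2 ^ k) ^ n := by
  induction n with
  | zero => simp [twoPow]
  | succ n ih =>
    simp only [twoPow, bagProd, Multiset.map_bind, Multiset.sum_bind]
    rw [pow_succ, ← ih, ← Multiset.sum_map_mul_right]
    congr 1
    refine Multiset.map_congr rfl fun x _ => ?_
    simp [mul_pow]
    ring

theorem nu_twoPow (n : ℕ) : nu (twoPow n) = 0 := by
  have h1 := twoPow_powerSum 1 n
  simp only [pow_one] at h1
  rw [nu_eq, h1, twoPow_powerSum 3 n, ← pow_mul, mul_comm, pow_mul]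
  norm_num

theorem mem_twoPow {n y : ℕ} : y ∈ twoPow n ↔ ∃ i ≤ n, y = 2 ^ i := by
  induction n generalizing y with
  | zero => simp [twoPow]
  | succ n ih =>
    have hstep : y ∈ twoPow (n + 1) ↔ ∃ a ∈ twoPow n, y = a ∨ y = a * 2 := by
      simp [twoPow, bagProd, eq_comm, and_or_left, exists_or]
    rw [hstep]
    constructor
    · rintro ⟨a, ha, h⟩
      obtain ⟨i, hi, rfl⟩ := ih.1 ha
      rcases h with rfl | rfl
      · exact ⟨i, by omega, rfl⟩
      · exact ⟨i + 1, by omega, (pow_succ 2 i).symm⟩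
    · rintro ⟨i, hi, rfl⟩
      rcases Nat.lt_or_ge n i with h | h
      · obtain rfl : i = n + 1 := by omega
        exact ⟨2 ^ n, ih.2 ⟨n, le_rfl, rfl⟩, Or.inr (pow_succ 2 n)⟩
      · exact ⟨2 ^ i, ih.2 ⟨i, h, rfl⟩, Or.inl rfl⟩

theorem le_of_mem_twoPow_succ {n y : ℕ} (hy : y ∈ twoPow (n + 1)) (hne : y ≠ 2 ^ (n + 1)) :
    y ≤ 2 ^ n := by
  obtain ⟨i, hi, rfl⟩ := mem_twoPow.1 hy
  have hi' : i ≠ n + 1 := fun h => hne (by rw [h])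
  exact Nat.pow_le_pow_right (by norm_num) (by omega)

/-- There are ν = 0 multisets of positive integers whose largest element exceeds all
others by at least N; in particular the n-fold bag product of {1,2} has ν = 0, contains
2ⁿ, and all its other elements are at most 2^(n−1), with 2ⁿ − 2^(n−1) = 2^(n−1). -/
theorem stmt_12 :
    (∀ N : ℕ, 0 < N → ∃ σ : Multiset ℕ, (∀ x ∈ σ, 0 < x) ∧ nu σ = 0 ∧
      ∃ M ∈ σ, ∀ y ∈ σ, y ≠ M → y + N ≤ M) ∧
    (∀ n : ℕ, 1 ≤ n → nu (twoPow n) = 0 ∧ 2 ^ n ∈ twoPow n ∧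
      (∀ y ∈ twoPow n, y ≠ 2 ^ n → y ≤ 2 ^ (n - 1)) ∧
      2 ^ n - 2 ^ (n - 1) = 2 ^ (n - 1)) := by
  refine ⟨fun N _ => ?_, fun n hn => ?_⟩
  -- The gap `2 ^ N` of the `(N + 1)`-fold product exceeds `N`.
  · refine ⟨twoPow (N + 1), fun x hx => ?_, nu_twoPow _, 2 ^ (N + 1),
      mem_twoPow.2 ⟨_, le_rfl, rfl⟩, fun y hy hne => ?_⟩
    · obtain ⟨i, _, rfl⟩ := mem_twoPow.1 hx
      positivity
    · have h1 := le_of_mem_twoPow_succ hy hne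
      have h2 : N < 2 ^ N := Nat.lt_two_pow_self
      rw [pow_succ]
      omega
  · obtain ⟨m, rfl⟩ : ∃ m, n = m + 1 := ⟨n - 1, by omega⟩
    refine ⟨nu_twoPow _, mem_twoPow.2 ⟨_, le_rfl, rfl⟩,
      fun y hy hne => le_of_mem_twoPow_succ hy hne, ?_⟩
    rw [Nat.add_sub_cancel, pow_succ]
    omega
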